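/- Let A be a hereditary abelian category and let X, Y be cochain complexes in A with zero differentials. Then the natural map Hom_{D(A)}(X, Y) → ∏_{n∈ℤ} Hom_A(X^n, Y^n) × ∏_{n∈ℤ} Ext¹_A(X^n, Y^{n-1}), sending f to the collection of its induced maps on cohomology together with the components Σ^n(π_{n-1} ∘ f ∘ ι_n), is a bijection. -/

import Mathlib

open CategoryTheory CategoryTheory.Limits CategoryTheory.Abelian

/-!
Let `f : M[-n] ⟶ Z` be a morphism in the derived category, where `Ext²(M, -) = 0`. Represent `f` by
a fraction through a quasi-isomorphism `P ⟶ M[-n]` with `P` in degrees `≤ n`, and let `B` be the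
stupid truncation of `P` to the degrees `n - 1` and `n`. The cone of `B ⟶ M[-n]` has cohomology only
in degree `n - 2`, so this morphism has a section, the obstruction lying in an `Ext²`. Hence `f` is
also represented by a fraction through a complex concentrated in degrees `n - 1` and `n`.

Choose such a resolution `R n` of each `Xⁿ[-n]`. In each degree only two of the `R n` are nonzero,
so their coproduct exists although `A` need not have infinite coproducts, and it is quasi-isomorphic
to `X`. Thus every family of morphisms `Xⁿ[-n] ⟶ Z` extends to `X`, and the extension is unique
because an endomorphism of `X` compatible with the inclusions is an isomorphism on cohomology.
Finally, a morphism `R n ⟶ Y` only sees the summands `Yⁿ` and `Yⁿ⁻¹` of `Y`.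
-/

section Coproducts

variable {C : Type*} [Category* C]

lemma hasCoproduct_of_isZero_of_notMem {J : Type*} (F : J → C) (s : Set J)
    [HasCoproduct fun j : s => F j] (hF : ∀ j ∉ s, IsZero (F j)) : HasCoproduct F := by
  classical
  let inj (j : J) : F j ⟶ ∐ fun j : s => F j :=
    if h : j ∈ s then Sigma.ι (fun j : s => F j) ⟨j, h⟩ else (hF j h).to_ _
  have inj_mem (j : s) : inj j = Sigma.ι (fun j : s => F j) j := dif_pos j.2
  refine ⟨⟨⟨Cofan.mk _ inj,
    Cofan.IsColimit.mk _ (fun t => Limits.Sigma.desc fun j : s => t.inj j) (fun t j => ?_)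
      (fun t m hm => ?_)⟩⟩⟩
  · by_cases hj : j ∈ s
    · simp [inj, hj]
    · exact (hF j hj).eq_of_src _ _
  · refine Limits.Sigma.hom_ext (f := fun j : s => F j) _ _ fun j => ?_
    rw [Limits.Sigma.ι_desc, ← hm j, ← inj_mem j]
    rfl

end Coproducts

section Homology

open HomologicalComplex

variable {C : Type*} [Category* C] {J : Type*} {c : ComplexShape J}

lemma homologyMap_congr [HasZeroMorphisms C] {K L : HomologicalComplex C c} {φ ψ : K ⟶ L} {j : J}
    [K.HasHomology j] [L.HasHomology j] (h : φ.f j = ψ.f j) :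
    homologyMap φ j = homologyMap ψ j := by
  have cyclesMap_congr : cyclesMap φ j = cyclesMap ψ j := by
    simp only [← cancel_mono (L.iCycles j), cyclesMap_i, h]
  rw [← cancel_epi (K.homologyπ j), homologyπ_naturality, homologyπ_naturality, cyclesMap_congr]

lemma homologyMap_sum [Preadditive C] [CategoryWithHomology C] {K L : HomologicalComplex C c}
    {I : Type*} (φ : I → (K ⟶ L)) (s : Finset I) (j : J) :
    homologyMap (∑ m ∈ s, φ m) j = ∑ m ∈ s, homologyMap (φ m) j :=
  (homologyFunctor C c j).map_sum φ s

-- The identity of the coproduct agrees in degree `j` with the finite sum of the idempotents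
-- `Sigma.π R m ≫ Sigma.ι R m`, of which only the `n`-th one can be nonzero on homology.
lemma quasiIsoAt_sigmaι [Abelian C] {I : Type*} (R : I → HomologicalComplex C c)
    [HasCoproduct R] {j : J} [PreservesColimit (Discrete.functor R) (eval C c j)] (s : Finset I)
    (hs : ∀ m ∉ s, IsZero ((R m).X j)) {n : I} (hns : n ∈ s)
    (hn : ∀ m ≠ n, IsZero ((R m).homology j)) : QuasiIsoAt (Sigma.ι R n) j := by
  classical
  have ι_sum (m) (hm : m ∈ s) : Sigma.ι R m ≫ ∑ k ∈ s, Sigma.π R k ≫ Sigma.ι R k = Sigma.ι R m := by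
    rw [Preadditive.comp_sum, Finset.sum_eq_single_of_mem m hm, Sigma.ι_π_eq_id_assoc]
    exact fun k _ hk => by rw [Sigma.ι_π_of_ne_assoc _ hk.symm, zero_comp]
  have sum_f : (∑ k ∈ s, Sigma.π R k ≫ Sigma.ι R k).f j = (𝟙 (∐ R) : ∐ R ⟶ ∐ R).f j := by
    refine (isColimitOfPreserves (eval C c j) (colimit.isColimit _)).hom_ext fun ⟨m⟩ => ?_
    by_cases hm : m ∈ s
    · exact congr_arg (fun φ => φ.f j) ((ι_sum m hm).trans (Category.comp_id _).symm)
    · exact (hs m hm).eq_of_src _ _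
  have homologyMap_eq_zero (m) (hm : m ≠ n) : homologyMap (Sigma.π R m ≫ Sigma.ι R m) j = 0 := by
    rw [homologyMap_comp, (hn m hm).eq_zero_of_tgt (homologyMap (Sigma.π R m) j), zero_comp]
  rw [quasiIsoAt_iff_isIso_homologyMap]
  refine ⟨homologyMap (Sigma.π R n) j, ?_, ?_⟩
  · rw [← homologyMap_comp, Sigma.ι_π_eq_id, homologyMap_id]
  · rw [← homologyMap_comp, ← homologyMap_id, ← homologyMap_congr sum_f, homologyMap_sum,
      Finset.sum_eq_single_of_mem n hns fun m _ hm => homologyMap_eq_zero m hm]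

end Homology

section Pretriangulated

open Pretriangulated

variable {C : Type*} [Category* C] [HasZeroObject C] [HasShift C ℤ] [Preadditive C]
  [∀ n : ℤ, (shiftFunctor C n).Additive] [Pretriangulated C]

-- Lifting the `i j` along the fibre `w` of `f` gives `h` such that `h ≫ w` is an automorphism of
-- `X`, while `w ≫ f = 0`.
lemma eq_zero_of_weak_coproduct {J : Type*} {S : J → C} {X : C} (i : ∀ j, S j ⟶ X)
    (hdesc : ∀ (W : C) (g : ∀ j, S j ⟶ W), ∃ h : X ⟶ W, ∀ j, i j ≫ h = g j)
    (hend : ∀ e : X ⟶ X, (∀ j, i j ≫ e = i j) → IsIso e)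
    {Z : C} (f : X ⟶ Z) (hf : ∀ j, i j ≫ f = 0) : f = 0 := by
  obtain ⟨W, w, δ, hT⟩ := distinguished_cocone_triangle₁ f
  choose l hl using fun j => Triangle.coyoneda_exact₂ _ hT (i j) (hf j)
  obtain ⟨h, hh⟩ := hdesc W l
  have : IsIso (h ≫ w) := hend _ fun j => by rw [reassoc_of% (hh j)]; exact (hl j).symm
  have hw : w ≫ f = 0 := comp_distTriang_mor_zero₁₂ _ hT
  rw [← cancel_epi (h ≫ w), Category.assoc, hw, comp_zero, comp_zero]

end Pretriangulated

section DerivedCategory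

open DerivedCategory HomologySequence Pretriangulated

variable {A : Type*} [Category* A] [Abelian A] [HasDerivedCategory A]

lemma isIso_homologyFunctor_map_Q_map_iff {K L : CochainComplex A ℤ} (φ : K ⟶ L) (n : ℤ) :
    IsIso ((homologyFunctor A n).map (Q.map φ)) ↔ QuasiIsoAt φ n :=
  (NatIso.isIso_map_iff (homologyFunctorFactors A n) φ).trans
    (quasiIsoAt_iff_isIso_homologyMap φ n).symm

lemma isZero_homologyFunctor_obj₃ {T : Triangle (DerivedCategory A)} (hT : T ∈ distTriang _)
    {m n : ℤ} (hmn : m + 1 = n) [Epi ((homologyFunctor A m).map T.mor₁)]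
    [Mono ((homologyFunctor A n).map T.mor₁)] : IsZero ((homologyFunctor A m).obj T.obj₃) :=
  (exact₃ T hT m n hmn).isZero_of_both_zeros
    ((epi_homologyMap_mor₁_iff T hT m).1 inferInstance)
    ((mono_homologyMap_mor₁_iff T hT m n hmn).1 inferInstance)

lemma subsingleton_hom_singleFunctor_obj [HasExt.{w} A] {M N : A} {k : ℕ}
    [Subsingleton (Ext M N k)] {a b : ℤ} (hab : b + k = a) :
    Subsingleton ((singleFunctor A a).obj M ⟶ (singleFunctor A b).obj N) := by
  let e₁ := ((singleFunctors A).shiftIso a 0 a (add_zero a)).app M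
  let e₂ : ((singleFunctor A b).obj N)⟦a⟧ ≅ ((singleFunctor A 0).obj N)⟦(k : ℤ)⟧ :=
    ((singleFunctors A).shiftIso a (-k) b (by lia)).app N ≪≫
      (((singleFunctors A).shiftIso (k : ℤ) (-k) 0 (by lia)).app N).symm
  have : Subsingleton ((singleFunctor A 0).obj M ⟶ ((singleFunctor A 0).obj N)⟦(k : ℤ)⟧) :=
    Ext.homEquiv.symm.subsingleton
  refine ⟨fun f g => (shiftFunctor (DerivedCategory A) a).map_injective ?_⟩
  rw [← cancel_epi e₁.inv, ← cancel_mono e₂.hom]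
  exact Subsingleton.elim _ _

-- The cone of `t` has the form `N[2 - n]`, so the obstruction to a section lies in `Ext²(M, N)`.
lemma isSplitEpi_of_isIso_homologyFunctor_map [HasExt.{w} A] {M : A}
    (hM : ∀ N, Subsingleton (Ext M N 2)) {n : ℤ} {B : DerivedCategory A} [B.IsGE (n - 1)]
    [B.IsLE n] (t : B ⟶ (singleFunctor A n).obj M) [IsIso ((homologyFunctor A n).map t)] :
    IsSplitEpi t := by
  obtain ⟨C, p, δ, hT⟩ := distinguished_cocone_triangle t
  have epi_t (j : ℤ) : Epi ((homologyFunctor A j).map t) := by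
    obtain hj | rfl | hj := lt_trichotomy j n
    · exact (isZero_of_isGE _ n j hj).epi _
    · infer_instance
    · exact (isZero_of_isLE _ n j hj).epi _
  have mono_t (j : ℤ) (hj : j ≠ n - 1) : Mono ((homologyFunctor A j).map t) := by
    obtain hjn | rfl | hjn := lt_trichotomy j n
    · exact (isZero_of_isGE B (n - 1) j (by lia)).mono _
    · infer_instance
    · exact (isZero_of_isLE B n j hjn).mono _
  have isZero_C (j : ℤ) (hj : j ≠ n - 2) : IsZero ((homologyFunctor A j).obj C) :=
    have : Epi ((homologyFunctor A j).map (Triangle.mk t p δ).mor₁) := epi_t j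
    have : Mono ((homologyFunctor A (j + 1)).map (Triangle.mk t p δ).mor₁) :=
      mono_t (j + 1) (by lia)
    isZero_homologyFunctor_obj₃ hT rfl
  have : C.IsGE (n - 2) := (isGE_iff C _).2 fun j hj => isZero_C j hj.ne
  have : C.IsLE (n - 2) := (isLE_iff C _).2 fun j hj => isZero_C j hj.ne'
  obtain ⟨N, ⟨e⟩⟩ := C.exists_iso_singleFunctor_obj_of_isGE_of_isLE (n - 2)
  have hp : p = 0 := by
    have := hM N
    have := subsingleton_hom_singleFunctor_obj (M := M) (N := N) (k := 2) (sub_add_cancel n 2)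
    rw [← cancel_mono e.hom]
    exact Subsingleton.elim _ _
  obtain ⟨σ, hσ⟩ := Triangle.coyoneda_exact₂ _ hT (𝟙 ((singleFunctor A n).obj M))
    ((Category.id_comp p).trans hp)
  exact ⟨⟨σ, hσ.symm⟩⟩

end DerivedCategory

section TwoTerm

open HomologicalComplex

lemma exists_twoTerm_quasiIsoAt {C : Type*} [Category* C] [HasZeroMorphisms C] [HasZeroObject C]
    [CategoryWithHomology C] (K : CochainComplex C ℤ) (n : ℤ) [K.IsStrictlyLE n] :
    ∃ (B : CochainComplex C ℤ) (_ : B.IsStrictlyGE (n - 1)) (_ : B.IsStrictlyLE n) (i : B ⟶ K),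
      QuasiIsoAt i n := by
  have hn : (ComplexShape.up ℤ).Rel (n - 1) n := sub_add_cancel n 1
  have hne : n - 1 ≠ n := by lia
  let i : double (K.d (n - 1) n) hn ⟶ K := mkHomFromDouble hn hne (𝟙 _) (𝟙 _) (by simp)
    fun k hk => (K.isZero_of_isStrictlyLE n k ((lt_add_one n).trans_eq hk)).eq_of_tgt _ _
  have isZero_X (k : ℤ) (hk : k ≠ n - 1 ∧ k ≠ n) : IsZero ((double (K.d (n - 1) n) hn).X k) :=
    isZero_double_X _ hn k hk.1 hk.2
  refine ⟨_, (CochainComplex.isStrictlyGE_iff _ _).2 fun k hk => isZero_X k (by lia),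
    (CochainComplex.isStrictlyLE_iff _ _).2 fun k hk => isZero_X k (by lia), i, ?_⟩
  rw [quasiIsoAt_iff' i (n - 1) n (n + 1) (by simp) (by simp)]
  let φ := (shortComplexFunctor' C (ComplexShape.up ℤ) (n - 1) n (n + 1)).map i
  have : Epi φ.τ₁ := by
    change Epi (i.f (n - 1))
    rw [mkHomFromDouble_f₀]
    infer_instance
  have : IsIso φ.τ₂ := by
    change IsIso (i.f n)
    rw [mkHomFromDouble_f₁]
    infer_instance
  have : Mono φ.τ₃ := (isZero_X (n + 1) (by lia)).mono _
  exact ShortComplex.quasiIso_of_epi_of_isIso_of_mono φ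

lemma isZero_X_of_twoTerm {C : Type*} [Category* C] [HasZeroMorphisms C] (K : CochainComplex C ℤ)
    (n : ℤ) [K.IsStrictlyGE (n - 1)] [K.IsStrictlyLE n] {k : ℤ} (hk : k ≠ n) (hk' : k ≠ n - 1) :
    IsZero (K.X k) := by
  obtain hlt | hgt := hk.lt_or_gt
  · exact K.isZero_of_isStrictlyGE (n - 1) k (by lia)
  · exact K.isZero_of_isStrictlyLE n k hgt

section Coproduct

variable {A : Type*} [Category* A] [Abelian A] (R : ℤ → CochainComplex A ℤ)
  [∀ n, (R n).IsStrictlyGE (n - 1)] [∀ n, (R n).IsStrictlyLE n]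

lemma isZero_X_of_notMem_pair {k n : ℤ} (hn : n ∉ ({k, k + 1} : Finset ℤ)) :
    IsZero ((R n).X k) := by
  simp only [Finset.mem_insert, Finset.mem_singleton, not_or] at hn
  exact isZero_X_of_twoTerm (R n) n (by lia) (by lia)

lemma hasColimit_comp_eval_of_twoTerm (k : ℤ) :
    HasColimit (Discrete.functor R ⋙ eval A (ComplexShape.up ℤ) k) := by
  have : HasCoproduct fun n => (R n).X k :=
    hasCoproduct_of_isZero_of_notMem _ (({k, k + 1} : Finset ℤ) : Set ℤ)
      fun n hn => isZero_X_of_notMem_pair R hn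
  exact hasColimit_of_iso (F := Discrete.functor fun n => (R n).X k)
    (Discrete.natIso fun _ => Iso.refl _)

lemma hasCoproduct_of_twoTerm : HasCoproduct R :=
  have := hasColimit_comp_eval_of_twoTerm R
  inferInstance

lemma quasiIsoAt_sigmaι_of_twoTerm [HasCoproduct R] {n : ℤ}
    (hn : ∀ m ≠ n, IsZero ((R m).homology n)) : QuasiIsoAt (Sigma.ι R n) n :=
  have := hasColimit_comp_eval_of_twoTerm R
  quasiIsoAt_sigmaι R {n, n + 1} (fun _ => isZero_X_of_notMem_pair R) (Finset.mem_insert_self _ _)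
    hn

end Coproduct

section DerivedCategory

open DerivedCategory

variable {A : Type*} [Category* A] [Abelian A] [HasDerivedCategory A] [HasExt.{w} A]

lemma exists_twoTerm_fac {M : A} (hM : ∀ N, Subsingleton (Ext M N 2)) {n : ℤ}
    {Z : CochainComplex A ℤ} (f : Q.obj ((single A (ComplexShape.up ℤ) n).obj M) ⟶ Q.obj Z) :
    ∃ (R : CochainComplex A ℤ) (_ : R.IsStrictlyGE (n - 1)) (_ : R.IsStrictlyLE n)
      (s : R ⟶ (single A (ComplexShape.up ℤ) n).obj M) (_ : QuasiIso s) (g : R ⟶ Z),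
      Q.map s ≫ f = Q.map g := by
  obtain ⟨P, _, s, _, g, rfl⟩ := right_fac_of_isStrictlyLE f n
  obtain ⟨B, _, _, i, hi⟩ := exists_twoTerm_quasiIsoAt P n
  have : IsIso ((homologyFunctor A n).map (Q.map i)) :=
    (isIso_homologyFunctor_map_Q_map_iff i n).2 hi
  have isIso_map : IsIso ((homologyFunctor A n).map (Q.map i ≫ Q.map s)) := by
    rw [Functor.map_comp]
    infer_instance
  obtain ⟨σ, hσ⟩ : ∃ σ, σ ≫ Q.map i ≫ Q.map s = 𝟙 _ :=
    let p : Q.obj B ⟶ (singleFunctor A n).obj M := Q.map i ≫ Q.map s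
    have : IsIso ((homologyFunctor A n).map p) := isIso_map
    let h := (isSplitEpi_of_isIso_homologyFunctor_map hM p).exists_splitEpi.some
    ⟨h.section_, h.id⟩
  have inv_s : inv (Q.map s) = σ ≫ Q.map i :=
    IsIso.inv_eq_of_inv_hom_id ((Category.assoc _ _ _).trans hσ)
  have : CochainComplex.IsStrictlyGE ((single A (ComplexShape.up ℤ) n).obj M) (n - 1) :=
    CochainComplex.isStrictlyGE_of_ge _ (n - 1) n (by lia)
  obtain ⟨R, hR₁, hR₂, t, ht, g', hg'⟩ :=
    right_fac_of_isStrictlyLE_of_isStrictlyGE (n - 1) n σ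
  refine ⟨R, hR₁, hR₂, t, (isIso_Q_map_iff_quasiIso _ t).1 ht, g' ≫ i ≫ g, ?_⟩
  rw [inv_s, hg', Category.assoc, Category.assoc, IsIso.hom_inv_id_assoc, Q.map_comp, Q.map_comp]

end DerivedCategory

end TwoTerm

section ZeroDifferential

open HomologicalComplex

section Single

variable {C : Type*} [Category* C] [HasZeroMorphisms C] [HasZeroObject C]
  {J : Type*} [DecidableEq J] {c : ComplexShape J} (K : HomologicalComplex C c)

/-- The inclusion `ι_n` of the degree `n` part, placed in degree `n`, into a complex with zero
differentials. -/
noncomputable abbrev singleInclusion (hK : ∀ i j, K.d i j = 0) (n : J) :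
    (single C c n).obj (K.X n) ⟶ K :=
  mkHomFromSingle (𝟙 (K.X n)) fun k _ => by rw [hK, comp_zero]

/-- The projection `π_n` of a complex with zero differentials onto its degree `n` part, placed in
degree `n`. -/
noncomputable abbrev singleProjection (hK : ∀ i j, K.d i j = 0) (n : J) :
    K ⟶ (single C c n).obj (K.X n) :=
  mkHomToSingle (𝟙 (K.X n)) fun i _ => by rw [hK, zero_comp]

variable (hK : ∀ i j, K.d i j = 0) (n : J)

lemma singleInclusion_comp_singleProjection :
    singleInclusion K hK n ≫ singleProjection K hK n = 𝟙 _ := by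
  apply from_single_hom_ext
  simp

lemma singleInclusion_comp_singleProjection_of_ne {m n : J} (h : m ≠ n) :
    singleInclusion K hK m ≫ singleProjection K hK n = 0 :=
  from_single_hom_ext ((isZero_single_obj_X c n (K.X n) m h).eq_of_tgt _ _)

lemma singleProjection_comp_singleInclusion_f_self :
    (singleProjection K hK n ≫ singleInclusion K hK n).f n = 𝟙 _ := by
  simp

lemma singleProjection_comp_singleInclusion_f_of_ne {k n : J} (h : k ≠ n) :
    (singleProjection K hK n ≫ singleInclusion K hK n).f k = 0 := by
  rw [comp_f, (isZero_single_obj_X c n (K.X n) k h).eq_zero_of_tgt ((singleProjection K hK n).f k),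
    zero_comp]

lemma quasiIsoAt_singleInclusion [CategoryWithHomology C] :
    QuasiIsoAt (singleInclusion K hK n) n := by
  rw [quasiIsoAt_iff_isIso_homologyMap]
  refine ⟨homologyMap (singleProjection K hK n) n, ?_, ?_⟩
  · rw [← homologyMap_comp, singleInclusion_comp_singleProjection, homologyMap_id]
  · rw [← homologyMap_comp, ← homologyMap_id]
    exact homologyMap_congr (singleProjection_comp_singleInclusion_f_self K hK n)

end Single

lemma eq_add_of_twoTerm {C : Type*} [Category* C] [Preadditive C] [HasZeroObject C]
    {R Y : CochainComplex C ℤ} (hY : ∀ i j, Y.d i j = 0) (n : ℤ) [R.IsStrictlyGE (n - 1)]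
    [R.IsStrictlyLE n] (g : R ⟶ Y) :
    g = g ≫ singleProjection Y hY n ≫ singleInclusion Y hY n +
      g ≫ singleProjection Y hY (n - 1) ≫ singleInclusion Y hY (n - 1) := by
  ext k
  rw [add_f_apply, comp_f g, comp_f g]
  by_cases hk : k = n
  · subst hk
    rw [singleProjection_comp_singleInclusion_f_self,
      singleProjection_comp_singleInclusion_f_of_ne Y hY (by lia), Category.comp_id, comp_zero,
      add_zero]
  by_cases hk' : k = n - 1
  · subst hk'
    rw [singleProjection_comp_singleInclusion_f_self,
      singleProjection_comp_singleInclusion_f_of_ne Y hY hk, Category.comp_id, comp_zero, zero_add]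
  exact (isZero_X_of_twoTerm R n hk hk').eq_of_src _ _

lemma quasiIso_sigmaDesc_comp_singleInclusion {C : Type*} [Category* C] [Abelian C]
    (X : CochainComplex C ℤ) (hX : ∀ i j, X.d i j = 0) (R : ℤ → CochainComplex C ℤ) [HasCoproduct R]
    [∀ n, (R n).IsStrictlyGE (n - 1)] [∀ n, (R n).IsStrictlyLE n]
    (s : ∀ n, R n ⟶ (single C (ComplexShape.up ℤ) n).obj (X.X n)) [∀ n, QuasiIso (s n)] :
    QuasiIso (Limits.Sigma.desc fun n => s n ≫ singleInclusion X hX n) where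
  quasiIsoAt n := by
    have := quasiIsoAt_sigmaι_of_twoTerm R (n := n) fun m hm =>
      (isZero_single_obj_homology _ m (X.X m) n hm.symm).of_iso (asIso (homologyMap (s m) n))
    have := quasiIsoAt_singleInclusion X hX n
    have : QuasiIsoAt (Sigma.ι R n ≫
        Limits.Sigma.desc fun n => s n ≫ singleInclusion X hX n) n := by
      rw [Limits.Sigma.ι_desc]
      infer_instance
    exact quasiIsoAt_of_comp_left (Sigma.ι R n) _ n

section DerivedCategory

open DerivedCategory

variable {A : Type*} [Category* A] [Abelian A] [HasDerivedCategory A]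

lemma isIso_of_singleInclusion_comp_eq (X : CochainComplex A ℤ) (hX : ∀ i j, X.d i j = 0)
    (e : Q.obj X ⟶ Q.obj X)
    (he : ∀ n, Q.map (singleInclusion X hX n) ≫ e = Q.map (singleInclusion X hX n)) : IsIso e := by
  refine (isIso_iff A e).2 fun n => ?_
  have : IsIso ((homologyFunctor A n).map (Q.map (singleInclusion X hX n))) :=
    (isIso_homologyFunctor_map_Q_map_iff _ n).2 (quasiIsoAt_singleInclusion X hX n)
  have : IsIso ((homologyFunctor A n).map (Q.map (singleInclusion X hX n)) ≫
      (homologyFunctor A n).map e) := by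
    rwa [← Functor.map_comp, he n]
  exact IsIso.of_isIso_comp_left ((homologyFunctor A n).map (Q.map (singleInclusion X hX n))) _

variable [HasExt.{w} A]

lemma exists_singleInclusion_comp_eq (X : CochainComplex A ℤ)
    (hExt : ∀ n N, Subsingleton (Ext (X.X n) N 2)) (hX : ∀ i j, X.d i j = 0) (Z : DerivedCategory A)
    (f : ∀ n, Q.obj ((single A (ComplexShape.up ℤ) n).obj (X.X n)) ⟶ Z) :
    ∃ F : Q.obj X ⟶ Z, ∀ n, Q.map (singleInclusion X hX n) ≫ F = f n := by
  choose R hR₁ hR₂ s hs g hg using fun n =>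
    exists_twoTerm_fac (hExt n) (f n ≫ (Q.objObjPreimageIso Z).inv)
  have := hasCoproduct_of_twoTerm R
  let S : ∐ R ⟶ X := Limits.Sigma.desc fun n => s n ≫ singleInclusion X hX n
  have : QuasiIso S := quasiIso_sigmaDesc_comp_singleInclusion X hX R s
  refine ⟨inv (Q.map S) ≫ Q.map (Limits.Sigma.desc g) ≫ (Q.objObjPreimageIso Z).hom, fun n => ?_⟩
  have s_comp : Q.map (s n) ≫ Q.map (singleInclusion X hX n) = Q.map (Sigma.ι R n) ≫ Q.map S := by
    rw [← Q.map_comp, ← Q.map_comp, Limits.Sigma.ι_desc]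
  rw [← cancel_epi (Q.map (s n)), reassoc_of% s_comp, IsIso.hom_inv_id_assoc,
    ← Q.map_comp_assoc, Limits.Sigma.ι_desc, ← hg, Category.assoc, Category.assoc, Iso.inv_hom_id,
    Category.comp_id]

lemma bijective_singleInclusion_comp (X : CochainComplex A ℤ)
    (hExt : ∀ n N, Subsingleton (Ext (X.X n) N 2)) (hX : ∀ i j, X.d i j = 0)
    (Z : DerivedCategory A) :
    Function.Bijective fun (F : Q.obj X ⟶ Z) n => Q.map (singleInclusion X hX n) ≫ F := by
  refine ⟨fun F G hFG => sub_eq_zero.1 ?_, fun f => ?_⟩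
  · refine eq_zero_of_weak_coproduct (fun n => Q.map (singleInclusion X hX n))
      (exists_singleInclusion_comp_eq X hExt hX) (isIso_of_singleInclusion_comp_eq X hX) _
      fun n => ?_
    rw [Preadditive.comp_sub, sub_eq_zero]
    exact congr_fun hFG n
  · obtain ⟨F, hF⟩ := exists_singleInclusion_comp_eq X hExt hX Z f
    exact ⟨F, funext hF⟩

lemma eq_add_of_subsingleton_ext {M : A} (hM : ∀ N, Subsingleton (Ext M N 2)) {n : ℤ}
    {Y : CochainComplex A ℤ} (hY : ∀ i j, Y.d i j = 0)
    (f : Q.obj ((single A (ComplexShape.up ℤ) n).obj M) ⟶ Q.obj Y) :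
    f = (f ≫ Q.map (singleProjection Y hY n)) ≫ Q.map (singleInclusion Y hY n) +
      (f ≫ Q.map (singleProjection Y hY (n - 1))) ≫ Q.map (singleInclusion Y hY (n - 1)) := by
  obtain ⟨R, _, _, s, _, g, hg⟩ := exists_twoTerm_fac hM f
  rw [← cancel_epi (Q.map s), Preadditive.comp_add]
  simp only [Category.assoc, reassoc_of% hg, hg]
  simpa only [Q.map_add, Q.map_comp] using congr_arg Q.map (eq_add_of_twoTerm hY n g)

lemma bijective_comp_singleProjection {M : A} (hM : ∀ N, Subsingleton (Ext M N 2)) (n : ℤ)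
    (Y : CochainComplex A ℤ) (hY : ∀ i j, Y.d i j = 0) :
    Function.Bijective fun f : Q.obj ((single A (ComplexShape.up ℤ) n).obj M) ⟶ Q.obj Y =>
      (f ≫ Q.map (singleProjection Y hY n), f ≫ Q.map (singleProjection Y hY (n - 1))) := by
  have ι_π (k : ℤ) : Q.map (singleInclusion Y hY k) ≫ Q.map (singleProjection Y hY k) = 𝟙 _ := by
    rw [← Q.map_comp, singleInclusion_comp_singleProjection, Q.map_id]
  have ι_π_of_ne {k l : ℤ} (h : k ≠ l) :
      Q.map (singleInclusion Y hY k) ≫ Q.map (singleProjection Y hY l) = 0 := by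
    rw [← Q.map_comp, singleInclusion_comp_singleProjection_of_ne Y hY h, Q.map_zero]
  refine ⟨fun f₁ f₂ h => ?_, fun ⟨a, b⟩ =>
    ⟨a ≫ Q.map (singleInclusion Y hY n) + b ≫ Q.map (singleInclusion Y hY (n - 1)), ?_⟩⟩
  · obtain ⟨h₀, h₁⟩ := Prod.mk.inj h
    rw [eq_add_of_subsingleton_ext hM hY f₁, h₀, h₁, ← eq_add_of_subsingleton_ext hM hY f₂]
  · refine Prod.ext ?_ ?_
    · dsimp only
      rw [Preadditive.add_comp, Category.assoc, Category.assoc, ι_π, ι_π_of_ne (by lia),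
        Category.comp_id, comp_zero, add_zero]
    · dsimp only
      rw [Preadditive.add_comp, Category.assoc, Category.assoc, ι_π, ι_π_of_ne (by lia),
        Category.comp_id, comp_zero, zero_add]

end DerivedCategory

end ZeroDifferential

open DerivedCategory in
theorem stmt_19_general {A : Type*} [Category* A] [Abelian A] [HasExt.{w} A]
    [HasDerivedCategory A] (X Y : CochainComplex A ℤ)
    (hExt : ∀ n N, Subsingleton (Ext (X.X n) N 2))
    (hX : ∀ i j, X.d i j = 0) (hY : ∀ i j, Y.d i j = 0) :
    Function.Bijective fun f : Q.obj X ⟶ Q.obj Y =>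
      ((fun n => Q.map (singleInclusion X hX n) ≫ f ≫ Q.map (singleProjection Y hY n)),
        fun n => Q.map (singleInclusion X hX n) ≫ f ≫ Q.map (singleProjection Y hY (n - 1))) := by
  have bijective_components := Function.Bijective.piMap fun n =>
    bijective_comp_singleProjection (hExt n) n Y hY
  simpa only [Function.comp_def, Pi.map, Equiv.arrowProdEquivProdArrow, Equiv.coe_fn_mk,
    Category.assoc] using (Equiv.arrowProdEquivProdArrow _ _ _).bijective.comp
      (bijective_components.comp (bijective_singleInclusion_comp X hExt hX (Q.obj Y)))

/-- Let `A` be a hereditary abelian category (`Ext²` vanishes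
identically) and let `X`, `Y` be cochain complexes in `A` with zero differentials.
Then the natural map
`Hom_{D(A)}(X, Y) → ∏ₙ Hom(Σ⁻ⁿXⁿ, Σ⁻ⁿYⁿ) × ∏ₙ Hom(Σ⁻ⁿXⁿ, Σ⁻⁽ⁿ⁻¹⁾Yⁿ⁻¹)`, given by
`f ↦ ((πₙ ∘ f ∘ ιₙ)ₙ, (πₙ₋₁ ∘ f ∘ ιₙ)ₙ)` where `ιₙ` and `πₙ` are the evident inclusion
and projection chain maps for the degree-`n` parts (single complexes placed in degree
`n`), is a bijection.  Under the identification
`Ext¹(Xⁿ, Yⁿ⁻¹) = Hom_{D(A)}(Σ⁻ⁿXⁿ, Σ⁻⁽ⁿ⁻¹⁾Yⁿ⁻¹)` this is the bijection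
`Hom_{D(A)}(X, Y) ≅ ∏ₙ Hom_A(Xⁿ, Yⁿ) × ∏ₙ Ext¹_A(Xⁿ, Yⁿ⁻¹)`. -/
theorem stmt_19 {A : Type u} [Category.{v} A] [Abelian A] [HasExt.{w} A]
    [HasDerivedCategory A]
    (hhered : ∀ M N : A, Subsingleton (Ext M N 2))
    (X Y : CochainComplex A ℤ) (hX : ∀ i j, X.d i j = 0) (hY : ∀ i j, Y.d i j = 0) :
    Function.Bijective
      (fun (f : DerivedCategory.Q.obj X ⟶ DerivedCategory.Q.obj Y) =>
        ((fun n : ℤ =>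
            DerivedCategory.Q.map (HomologicalComplex.mkHomFromSingle (𝟙 (X.X n))
                (fun k _ => by rw [hX, comp_zero])) ≫ f ≫
              DerivedCategory.Q.map (HomologicalComplex.mkHomToSingle (𝟙 (Y.X n))
                (fun i _ => by rw [hY, zero_comp]))),
         (fun n : ℤ =>
            DerivedCategory.Q.map (HomologicalComplex.mkHomFromSingle (𝟙 (X.X n))
                (fun k _ => by rw [hX, comp_zero])) ≫ f ≫
              DerivedCategory.Q.map (HomologicalComplex.mkHomToSingle (𝟙 (Y.X (n - 1)))
                (fun i _ => by rw [hY, zero_comp]))))) :=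
  stmt_19_general X Y (fun n => hhered (X.X n)) hX hY
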